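/- Let k ≥ 2, η ≥ 0, and let r ∈ ℂᵏ satisfy |r_i|² ≥ 2η for all i. Let R be a k×k Hermitian positive semidefinite complex matrix such that |R_{ij} − r_i·conj(r_j)| ≤ 2η for all i ≠ j. Then there do not exist two distinct indices i and j with Re(R_{ii}) < |r_i|² − 2η and Re(R_{jj}) < |r_j|² − 2η; that is, at most one diagonal entry of R falls below the corresponding |r_i|² by more than 2η. -/

import Mathlib

open Complex
open scoped ComplexOrder

/-!
Write `ε = 2η`. If the diagonal entries at `i ≠ j` were both small, the `2 × 2` principal minor and
the off-diagonal bound would give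
`(|r_i| |r_j| - ε)² ≤ |R_{ij}|² ≤ R_{ii} R_{jj} < (|r_i|² - ε) (|r_j|² - ε)`,
while `(x y - ε)² - (x² - ε) (y² - ε) = ε (x - y)² ≥ 0`. The first inequality squares
`|r_i| |r_j| - ε ≤ |R_{ij}|`, whose left side is nonnegative because `0 ≤ R_{ii} < |r_i|² - ε` and
likewise for `j`.
-/

section OrderedRing

variable {α : Type*} [CommRing α] [LinearOrder α] [IsStrictOrderedRing α] {a x y : α}

lemma le_mul_of_le_sq_of_le_sq (hx : 0 ≤ x) (hy : 0 ≤ y) (hax : a ≤ x ^ 2) (hay : a ≤ y ^ 2) :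
    a ≤ x * y := by
  rcases le_total x y with hxy | hyx
  · calc
      a ≤ x * x := by rwa [← sq]
      _ ≤ x * y := by gcongr
  · calc
      a ≤ y * y := by rwa [← sq]
      _ ≤ x * y := by gcongr

lemma sq_sub_mul_sq_sub_le_mul_sub_sq (ha : 0 ≤ a) (x y : α) :
    (x ^ 2 - a) * (y ^ 2 - a) ≤ (x * y - a) ^ 2 := by
  have hdiff : (x * y - a) ^ 2 - (x ^ 2 - a) * (y ^ 2 - a) = a * (x - y) ^ 2 := by ring
  exact sub_nonneg.1 (hdiff ▸ mul_nonneg ha (sq_nonneg (x - y)))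

end OrderedRing

section PosSemidef

variable {𝕜 n : Type*} [RCLike 𝕜]

lemma norm_mul_norm_sub_le_norm_of_norm_sub_mul_conj_le {z v w : 𝕜} {ε : ℝ}
    (h : ‖z - v * starRingEnd 𝕜 w‖ ≤ ε) : ‖v‖ * ‖w‖ - ε ≤ ‖z‖ := by
  have htri : ‖v * starRingEnd 𝕜 w‖ - ‖z‖ ≤ ‖z - v * starRingEnd 𝕜 w‖ := by
    simpa only [norm_sub_rev] using norm_sub_norm_le (v * starRingEnd 𝕜 w) z
  rw [norm_mul, RCLike.norm_conj] at htri
  linarith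

variable {R : Matrix n n 𝕜}

lemma re_diag_nonneg_of_posSemidef (hR : R.PosSemidef) (i : n) : 0 ≤ RCLike.re (R i i) :=
  (RCLike.nonneg_iff.1 hR.diag_nonneg).1

lemma norm_apply_sq_le_re_diag_mul_re_diag_of_posSemidef (hR : R.PosSemidef) (i j : n) :
    ‖R i j‖ ^ 2 ≤ RCLike.re (R i i) * RCLike.re (R j j) := by
  have hminor : 0 ≤ R i i * R j j - R i j * R j i :=
    (hR.submatrix ![i, j]).det_nonneg.trans_eq (Matrix.det_fin_two _)
  have hoffDiag : R i j * R j i = (‖R i j‖ : 𝕜) ^ 2 := by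
    rw [← hR.isHermitian.apply j i]
    exact RCLike.mul_conj (R i j)
  rw [hoffDiag, ← hR.isHermitian.coe_re_apply_self i, ← hR.isHermitian.coe_re_apply_self j,
    sub_nonneg] at hminor
  exact_mod_cast hminor

theorem at_most_one_small_diagonal_general {ε : ℝ} {r : n → 𝕜} (hR : R.PosSemidef)
    (hoff : Pairwise fun i j ↦ ‖R i j - r i * starRingEnd 𝕜 (r j)‖ ≤ ε) :
    {i | RCLike.re (R i i) < ‖r i‖ ^ 2 - ε}.Subsingleton := by
  intro i (hi : RCLike.re (R i i) < ‖r i‖ ^ 2 - ε) j (hj : RCLike.re (R j j) < ‖r j‖ ^ 2 - ε)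
  by_contra hij
  have hε : 0 ≤ ε := (norm_nonneg _).trans (hoff hij)
  have hRi := re_diag_nonneg_of_posSemidef hR i
  have hRj := re_diag_nonneg_of_posSemidef hR j
  have hle : ε ≤ ‖r i‖ * ‖r j‖ :=
    le_mul_of_le_sq_of_le_sq (norm_nonneg _) (norm_nonneg _) (by linarith) (by linarith)
  have hlt : (‖r i‖ * ‖r j‖ - ε) ^ 2 < (‖r i‖ * ‖r j‖ - ε) ^ 2 := calc
    (‖r i‖ * ‖r j‖ - ε) ^ 2 ≤ ‖R i j‖ ^ 2 :=
      pow_le_pow_left₀ (sub_nonneg.2 hle)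
        (norm_mul_norm_sub_le_norm_of_norm_sub_mul_conj_le (hoff hij)) 2
    _ ≤ RCLike.re (R i i) * RCLike.re (R j j) :=
      norm_apply_sq_le_re_diag_mul_re_diag_of_posSemidef hR i j
    _ < (‖r i‖ ^ 2 - ε) * (‖r j‖ ^ 2 - ε) := mul_lt_mul'' hi hj hRi hRj
    _ ≤ (‖r i‖ * ‖r j‖ - ε) ^ 2 := sq_sub_mul_sq_sub_le_mul_sub_sq hε _ _
  exact hlt.false

end PosSemidef

/-- Let `k ≥ 2`, `η ≥ 0`, and `r ∈ ℂᵏ` with `|r_i|² ≥ 2η` for all `i`.  If `R` is Hermitian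
positive semidefinite with `|R_{ij} − r_i conj(r_j)| ≤ 2η` for all `i ≠ j`, then at most one
diagonal entry of `R` falls below the corresponding `|r_i|²` by more than `2η`. -/
theorem at_most_one_small_diagonal
    (k : ℕ) (hk : 2 ≤ k) (η : ℝ) (hη : 0 ≤ η) (r : Fin k → ℂ)
    (hr : ∀ i, 2 * η ≤ ‖r i‖ ^ 2)
    (R : Matrix (Fin k) (Fin k) ℂ) (hR : R.PosSemidef)
    (hoff : ∀ i j, i ≠ j → ‖R i j - r i * (starRingEnd ℂ) (r j)‖ ≤ 2 * η) :
    ¬ ∃ i j, i ≠ j ∧ (R i i).re < ‖r i‖ ^ 2 - 2 * η ∧ (R j j).re < ‖r j‖ ^ 2 - 2 * η := by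
  rintro ⟨i, j, hij, hi, hj⟩
  exact hij (at_most_one_small_diagonal_general hR hoff hi hj)
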